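/- Let G₁ be an r₁-regular graph on n₁ vertices and m₁ edges, and let G₂ be an arbitrary graph on n₂ vertices. Then for each α ∈ [0,1], the characteristic polynomial of A_α(G₁ ∨̇ G₂), where G₁ ∨̇ G₂ is the subdivision-vertex join, satisfies ψ_{A_α(G₁ ∨̇ G₂)}(x) = (x−2α)^{m₁−n₁} · ψ_{A_α(G₂)}(x−αn₁) · ∏_{i=2}^{n₁} ( x² − α(2+r₁+n₂)x + α(αr₁+r₁+2αn₂) − (1−α)((1−α)r₁ + λ_i(A_α(G₁))) ) · ( x² − α(2+r₁+n₂)x − 2(r₁ − 2αr₁ − α²n₂) − n₁(1−α)²(x−2α)·Γ_{A_α(G₂)}(x−αn₁) ), where λ₁(A_α(G₁)) ≥ ⋯ ≥ λ_{n₁}(A_α(G₁)) are the A_α-eigenvalues of G₁. -/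

import Mathlib

open Matrix Polynomial
open scoped Classical

noncomputable section

/-- `A_α(G) = α·D(G) + (1-α)·A(G)`, where `D(G)` is the diagonal degree matrix and
`A(G)` the adjacency matrix. -/
def Aalpha {V : Type*} [Fintype V] (G : SimpleGraph V) (α : ℝ) : Matrix V V ℝ :=
  α • Matrix.diagonal (fun v => (G.degree v : ℝ)) + (1 - α) • G.adjMatrix ℝ

/-- The `M`-coronal `Γ_M(x) = 1ᵀ (xI − M)⁻¹ 1`, i.e. the sum of the entries of
`(xI − M)⁻¹`. -/
def coronal {n : Type*} [Fintype n] (M : Matrix n n ℝ) (x : ℝ) : ℝ :=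
  ∑ i, ∑ j, (x • (1 : Matrix n n ℝ) - M)⁻¹ i j

/-- The subdivision-vertex join `G₁ ∨̇ G₂`: take the subdivision graph `S(G₁)` (a new
vertex inserted in each edge of `G₁`) together with `G₂`, and join every original vertex
of `G₁` with every vertex of `G₂`. -/
def subdivisionVertexJoin {V₁ V₂ : Type*} (G₁ : SimpleGraph V₁) (G₂ : SimpleGraph V₂) :
    SimpleGraph (V₁ ⊕ (↥G₁.edgeSet ⊕ V₂)) :=
  SimpleGraph.fromRel fun a b =>
    match a, b with
    | Sum.inl v, Sum.inr (Sum.inl e) => v ∈ (e : Sym2 V₁)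
    | Sum.inl _, Sum.inr (Sum.inr _) => True
    | Sum.inr (Sum.inr u), Sum.inr (Sum.inr w) => G₂.Adj u w
    | _, _ => False

namespace Matrix

variable {n : Type*} [Fintype n] [DecidableEq n]

theorem eval_charpoly_eq_det_smul_one_sub (A : Matrix n n ℝ) (x : ℝ) :
    A.charpoly.eval x = (x • (1 : Matrix n n ℝ) - A).det := by
  rw [eval_charpoly, scalar_apply, smul_one_eq_diagonal]

theorem det_smul_one_sub_smul_of_charpoly_eq_prod {A : Matrix n n ℝ} {μ : n → ℝ}
    (hA : A.charpoly = ∏ i, (X - C (μ i))) (b c : ℝ) :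
    (c • (1 : Matrix n n ℝ) - b • A).det = ∏ i, (c - b * μ i) := by
  rcases eq_or_ne b 0 with rfl | hb
  · simp
  · have h : c • (1 : Matrix n n ℝ) - b • A = b • ((c / b) • (1 : Matrix n n ℝ) - A) := by
      rw [smul_sub, smul_smul, mul_div_cancel₀ _ hb]
    rw [h, det_smul, ← eval_charpoly_eq_det_smul_one_sub, hA, eval_prod, Fintype.card,
      ← Finset.prod_const, ← Finset.prod_mul_distrib]
    refine Finset.prod_congr rfl fun i _ => ?_
    simp only [eval_sub, eval_X, eval_C]
    field_simp

theorem det_one_sub_smul_of_one (k : ℝ) :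
    ((1 : Matrix n n ℝ) - k • of fun _ _ => (1 : ℝ)).det = 1 - k * Fintype.card n := by
  have h := det_one_add_replicateCol_mul_replicateRow (ι := Unit) (fun _ : n => -k)
    (fun _ : n => (1 : ℝ))
  have h' : (1 : Matrix n n ℝ) - k • of (fun _ _ => (1 : ℝ)) =
      1 + replicateCol Unit (fun _ : n => -k) * replicateRow Unit (fun _ : n => (1 : ℝ)) := by
    ext i j
    simp [mul_apply, sub_eq_add_neg]
  rw [h', h]
  simp [dotProduct]
  ring

/-- Subtracting a multiple of the all-ones matrix from a matrix with constant nonzero row sums. -/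
theorem det_sub_smul_of_one_mul {B : Matrix n n ℝ} {b : ℝ} (hB : ∀ i, ∑ j, B i j = b)
    (hb : b ≠ 0) (k : ℝ) :
    (B - k • of fun _ _ => (1 : ℝ)).det * b = B.det * (b - k * Fintype.card n) := by
  have h : B - k • of (fun _ _ => (1 : ℝ)) = B * (1 - (k / b) • of fun _ _ => (1 : ℝ)) := by
    rw [mul_sub, Matrix.mul_one, Matrix.mul_smul]
    ext i j
    simp [mul_apply, hB, div_mul_cancel₀ _ hb]
  rw [h, det_mul, det_one_sub_smul_of_one]
  field_simp

theorem charpoly_add_smul_of_one_mul {A : Matrix n n ℝ} {r : ℝ} (hA : ∀ i, ∑ j, A i j = r)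
    (k : ℝ) :
    (A + k • of fun _ _ => (1 : ℝ)).charpoly * (X - C r) =
      A.charpoly * (X - C (r + k * Fintype.card n)) := by
  refine eq_of_infinite_eval_eq _ _ ((Set.finite_singleton r).infinite_compl.mono fun x hx => ?_)
  have hB : ∀ i, ∑ j, (x • (1 : Matrix n n ℝ) - A) i j = x - r := fun i => by
    simp [Finset.sum_sub_distrib, hA, one_apply]
  have h := det_sub_smul_of_one_mul hB (sub_ne_zero.2 hx) k
  simp only [Set.mem_ofPred_eq, eval_mul, eval_charpoly_eq_det_smul_one_sub, eval_sub, eval_X,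
    eval_C, ← sub_sub]
  exact h

theorem det_smul_one_sub_smul_sub_smul_of_one {A : Matrix n n ℝ} {μ : n → ℝ}
    (hA : A.charpoly = ∏ i, (X - C (μ i))) {i₀ : n} (hrow : ∀ i, ∑ j, A i j = μ i₀)
    (b c k : ℝ) :
    (c • (1 : Matrix n n ℝ) - b • A - k • of fun _ _ => (1 : ℝ)).det =
      (∏ i ∈ Finset.univ.erase i₀, (c - b * μ i)) * (c - b * μ i₀ - k * Fintype.card n) := by
  have hrow' : ∀ i, ∑ j, (b • A) i j = b * μ i₀ := fun i => by
    simp [← Finset.mul_sum, hrow]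
  have hcp : (b • A).charpoly = ∏ i, (X - C (b * μ i)) := Polynomial.funext fun x => by
    simp [eval_charpoly_eq_det_smul_one_sub, det_smul_one_sub_smul_of_charpoly_eq_prod hA,
      eval_prod]
  have h := charpoly_add_smul_of_one_mul hrow' k
  rw [hcp, ← Finset.prod_erase_mul _ _ (Finset.mem_univ i₀), mul_right_comm] at h
  have h := congrArg (eval c) (mul_right_cancel₀ (X_sub_C_ne_zero _) h)
  rw [eval_charpoly_eq_det_smul_one_sub, ← sub_sub] at h
  rw [h]
  simp [eval_prod, sub_sub]

end Matrix

section Aalpha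

variable {V : Type*} [Fintype V] (G : SimpleGraph V) (α : ℝ)

theorem SimpleGraph.cast_degree_eq_sum_ite_adj [G.LocallyFinite] (i : V) :
    (G.degree i : ℝ) = ∑ k, if G.Adj i k then 1 else 0 := by
  rw [← SimpleGraph.card_neighborFinset_eq_degree, Finset.sum_boole]
  congr 2
  ext
  simp

theorem Aalpha_apply (i j : V) :
    Aalpha G α i j = α * (if i = j then ∑ k, (if G.Adj i k then 1 else 0) else 0) +
      (1 - α) * if G.Adj i j then 1 else 0 := by
  rw [← G.cast_degree_eq_sum_ite_adj]
  simp [Aalpha, Matrix.diagonal_apply, SimpleGraph.adjMatrix_apply]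

variable {G α}

theorem SimpleGraph.IsRegularOfDegree.sum_ite_adj {r : ℕ} [G.LocallyFinite]
    (hG : G.IsRegularOfDegree r) (i : V) : ∑ k, (if G.Adj i k then (1 : ℝ) else 0) = r := by
  rw [← hG i, G.cast_degree_eq_sum_ite_adj]

theorem sum_Aalpha_of_isRegularOfDegree {r : ℕ} [G.LocallyFinite] (hG : G.IsRegularOfDegree r)
    (i : V) : ∑ j, Aalpha G α i j = r := by
  simp only [Aalpha_apply, Finset.sum_add_distrib, ← Finset.mul_sum, hG.sum_ite_adj,
    Finset.sum_ite_eq, Finset.mem_univ, if_true]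
  ring

theorem Aalpha_root_le {r : ℕ} [G.LocallyFinite] [DecidableEq V] (hG : G.IsRegularOfDegree r)
    (hα : α ∈ Set.Icc (0 : ℝ) 1) {x : ℝ} (hx : (Aalpha G α).charpoly.IsRoot x) : x ≤ r := by
  have hev : Module.End.HasEigenvalue (Matrix.toLin' (Aalpha G α)) x := by
    rw [Module.End.hasEigenvalue_iff_isRoot_charpoly, Matrix.charpoly_toLin']
    exact hx
  obtain ⟨k, hk⟩ := eigenvalue_mem_ball hev
  have hnonneg : ∀ j, 0 ≤ Aalpha G α k j := fun j => by
    have := hα.1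
    have := sub_nonneg.2 hα.2
    rw [Aalpha_apply, hG.sum_ite_adj]
    positivity
  simp only [Metric.mem_closedBall, Real.norm_of_nonneg (hnonneg _), Real.dist_eq] at hk
  have hsum := Finset.sum_erase_add Finset.univ (Aalpha G α k) (Finset.mem_univ k)
  rw [sum_Aalpha_of_isRegularOfDegree hG] at hsum
  linarith [le_abs_self (x - Aalpha G α k k)]

theorem Aalpha_isRoot_degree {r : ℕ} [Nonempty V] [G.LocallyFinite] [DecidableEq V]
    (hG : G.IsRegularOfDegree r) : (Aalpha G α).charpoly.IsRoot (r : ℝ) := by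
  rw [IsRoot, Matrix.eval_charpoly_eq_det_smul_one_sub, ← Matrix.exists_mulVec_eq_zero_iff]
  refine ⟨1, one_ne_zero, ?_⟩
  ext i
  simp [Matrix.mulVec, dotProduct, Matrix.one_apply, sum_Aalpha_of_isRegularOfDegree hG]

end Aalpha

section Incidence

variable {V : Type*} (G : SimpleGraph V)

/-- The incidence matrix of `G` with columns indexed by the edges of `G`. -/
def edgeIncMatrix : Matrix V G.edgeSet ℝ :=
  Matrix.of fun v e => if v ∈ (e : Sym2 V) then 1 else 0

theorem sum_edgeIncMatrix_col [Fintype V] (e : G.edgeSet) : ∑ v, edgeIncMatrix G v e = 2 := by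
  rw [← G.sum_incMatrix_apply_of_mem_edgeSet e.2]
  exact Finset.sum_congr rfl fun v _ => by
    simp [edgeIncMatrix, SimpleGraph.incMatrix_apply', SimpleGraph.incidenceSet]

theorem edgeIncMatrix_mul_transpose [Fintype V] [DecidableEq V] [G.LocallyFinite] {r : ℕ}
    (hG : G.IsRegularOfDegree r) :
    edgeIncMatrix G * (edgeIncMatrix G)ᵀ = G.adjMatrix ℝ + (r : ℝ) • (1 : Matrix V V ℝ) := by
  have h : edgeIncMatrix G * (edgeIncMatrix G)ᵀ = G.incMatrix ℝ * (G.incMatrix ℝ)ᵀ := by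
    ext v w
    rw [Matrix.mul_apply, Matrix.mul_apply]
    have h0 : ∀ e : {e // e ∉ G.edgeSet}, G.incMatrix ℝ v e = 0 := fun e =>
      G.incMatrix_of_notMem_incidenceSet fun he => e.2 he.1
    rw [← Fintype.sum_subtype_add_sum_subtype (fun e => e ∈ G.edgeSet)]
    simp only [Matrix.transpose_apply, h0, zero_mul, Finset.sum_const_zero, add_zero]
    refine Finset.sum_congr rfl fun e _ => ?_
    have hinc : ∀ u, edgeIncMatrix G u e = G.incMatrix ℝ u e := fun u => by
      simp [edgeIncMatrix, SimpleGraph.incMatrix_apply', SimpleGraph.incidenceSet]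
    exact congrArg₂ _ (hinc v) (hinc w)
  rw [h, SimpleGraph.incMatrix_mul_transpose]
  ext v w
  rcases eq_or_ne v w with rfl | hvw
  · simp [hG v]
  · simp [hvw, SimpleGraph.adjMatrix_apply]

theorem sum_edgeIncMatrix_row [Fintype V] [G.LocallyFinite] {r : ℕ}
    (hG : G.IsRegularOfDegree r) (v : V) : ∑ e, edgeIncMatrix G v e = r := by
  have h := congrFun (congrFun (edgeIncMatrix_mul_transpose G hG) v) v
  rw [Matrix.mul_apply] at h
  simpa [edgeIncMatrix, ← ite_and] using h

end Incidence

section Join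

variable {V₁ V₂ : Type*} (G₁ : SimpleGraph V₁) (G₂ : SimpleGraph V₂)

@[simp] theorem subdivisionVertexJoin_adj_inl_inl (v w : V₁) :
    ¬(subdivisionVertexJoin G₁ G₂).Adj (Sum.inl v) (Sum.inl w) := by
  simp [subdivisionVertexJoin]

@[simp] theorem subdivisionVertexJoin_adj_inl_edge (v : V₁) (e : G₁.edgeSet) :
    (subdivisionVertexJoin G₁ G₂).Adj (Sum.inl v) (Sum.inr (Sum.inl e)) ↔ v ∈ (e : Sym2 V₁) := by
  simp [subdivisionVertexJoin]

@[simp] theorem subdivisionVertexJoin_adj_inl_inr (v : V₁) (u : V₂) :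
    (subdivisionVertexJoin G₁ G₂).Adj (Sum.inl v) (Sum.inr (Sum.inr u)) := by
  simp [subdivisionVertexJoin]

@[simp] theorem subdivisionVertexJoin_adj_edge_inl (v : V₁) (e : G₁.edgeSet) :
    (subdivisionVertexJoin G₁ G₂).Adj (Sum.inr (Sum.inl e)) (Sum.inl v) ↔ v ∈ (e : Sym2 V₁) := by
  simp [subdivisionVertexJoin]

@[simp] theorem subdivisionVertexJoin_adj_edge_edge (e f : G₁.edgeSet) :
    ¬(subdivisionVertexJoin G₁ G₂).Adj (Sum.inr (Sum.inl e)) (Sum.inr (Sum.inl f)) := by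
  simp [subdivisionVertexJoin]

@[simp] theorem subdivisionVertexJoin_adj_edge_inr (e : G₁.edgeSet) (u : V₂) :
    ¬(subdivisionVertexJoin G₁ G₂).Adj (Sum.inr (Sum.inl e)) (Sum.inr (Sum.inr u)) := by
  simp [subdivisionVertexJoin]

@[simp] theorem subdivisionVertexJoin_adj_inr_inl (u : V₂) (v : V₁) :
    (subdivisionVertexJoin G₁ G₂).Adj (Sum.inr (Sum.inr u)) (Sum.inl v) := by
  simp [subdivisionVertexJoin]

@[simp] theorem subdivisionVertexJoin_adj_inr_edge (u : V₂) (e : G₁.edgeSet) :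
    ¬(subdivisionVertexJoin G₁ G₂).Adj (Sum.inr (Sum.inr u)) (Sum.inr (Sum.inl e)) := by
  simp [subdivisionVertexJoin]

@[simp] theorem subdivisionVertexJoin_adj_inr_inr (u w : V₂) :
    (subdivisionVertexJoin G₁ G₂).Adj (Sum.inr (Sum.inr u)) (Sum.inr (Sum.inr w)) ↔
      G₂.Adj u w := by
  simpa [subdivisionVertexJoin, G₂.adj_comm w u] using fun h : G₂.Adj u w => h.ne

variable {G₁} [Fintype V₁] [Fintype V₂] [DecidableEq V₁] [DecidableEq V₂]

theorem Aalpha_subdivisionVertexJoin_eq_fromBlocks [G₁.LocallyFinite] {r : ℕ}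
    (hG₁ : G₁.IsRegularOfDegree r) (α : ℝ) :
    Aalpha (subdivisionVertexJoin G₁ G₂) α =
      Matrix.fromBlocks ((α * (r + Fintype.card V₂)) • (1 : Matrix V₁ V₁ ℝ))
        ((1 - α) • Matrix.fromCols (edgeIncMatrix G₁) (Matrix.of fun _ _ => 1))
        ((1 - α) • Matrix.fromRows (edgeIncMatrix G₁)ᵀ (Matrix.of fun _ _ => 1))
        (Matrix.fromBlocks ((2 * α) • (1 : Matrix G₁.edgeSet G₁.edgeSet ℝ)) 0 0
          (Aalpha G₂ α + (α * Fintype.card V₁) • (1 : Matrix V₂ V₂ ℝ))) := by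
  have hrow := sum_edgeIncMatrix_row G₁ hG₁
  have hcol := sum_edgeIncMatrix_col G₁
  simp only [edgeIncMatrix, Matrix.of_apply] at hrow hcol
  ext (v | e | u) (w | f | t)
  · rcases eq_or_ne v w with rfl | h
    · simp only [Aalpha_apply, Fintype.sum_sum_type, subdivisionVertexJoin_adj_inl_inl,
        subdivisionVertexJoin_adj_inl_edge, subdivisionVertexJoin_adj_inl_inr, if_true, if_false,
        Matrix.fromBlocks_apply₁₁, Matrix.smul_apply, Matrix.one_apply, Finset.sum_const_zero,
        Finset.sum_const, Finset.card_univ, nsmul_eq_mul, smul_eq_mul, ← hrow v]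
      ring_nf
    · simp [Aalpha_apply, h]
  · simp [Aalpha_apply, edgeIncMatrix]
  · simp [Aalpha_apply]
  · simp [Aalpha_apply, edgeIncMatrix]
  · rcases eq_or_ne e f with rfl | h
    · simp only [Aalpha_apply, Fintype.sum_sum_type, subdivisionVertexJoin_adj_edge_inl,
        subdivisionVertexJoin_adj_edge_edge, subdivisionVertexJoin_adj_edge_inr, if_true, if_false,
        Matrix.fromBlocks_apply₁₁, Matrix.fromBlocks_apply₂₂, Matrix.smul_apply, Matrix.one_apply,
        Finset.sum_const_zero, smul_eq_mul, ← hcol e]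
      ring_nf
    · simp [Aalpha_apply, h]
  · simp [Aalpha_apply]
  · simp [Aalpha_apply]
  · simp [Aalpha_apply]
  · simp only [Aalpha_apply, Fintype.sum_sum_type, Matrix.one_apply, Matrix.fromBlocks_apply₂₂,
      Matrix.add_apply, Matrix.smul_apply, smul_eq_mul]
    rcases eq_or_ne u t with rfl | h
    · simp [-Finset.sum_boole]
      ring
    · simp [h]

theorem det_smul_one_sub_Aalpha_subdivisionVertexJoin [G₁.LocallyFinite] {r : ℕ}
    (hG₁ : G₁.IsRegularOfDegree r) {α x : ℝ}
    (hdet : ((x - α * Fintype.card V₁) • (1 : Matrix V₂ V₂ ℝ) - Aalpha G₂ α).det ≠ 0)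
    (hx : x ≠ 2 * α) :
    (x • (1 : Matrix (V₁ ⊕ (G₁.edgeSet ⊕ V₂)) (V₁ ⊕ (G₁.edgeSet ⊕ V₂)) ℝ) -
        Aalpha (subdivisionVertexJoin G₁ G₂) α).det =
      (x - 2 * α) ^ ((Fintype.card G₁.edgeSet : ℤ) - (Fintype.card V₁ : ℤ)) *
        ((x - α * Fintype.card V₁) • (1 : Matrix V₂ V₂ ℝ) - Aalpha G₂ α).det *
        (((x - 2 * α) * (x - α * (r + Fintype.card V₂)) - (1 - α) * ((1 - α) * r - α * r)) •
            (1 : Matrix V₁ V₁ ℝ) - (1 - α) • Aalpha G₁ α -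
          ((x - 2 * α) * (1 - α) ^ 2 * coronal (Aalpha G₂ α) (x - α * Fintype.card V₁)) •
            Matrix.of fun _ _ => (1 : ℝ)).det := by
  have hy : x - 2 * α ≠ 0 := sub_ne_zero.2 hx
  set P : Matrix V₂ V₂ ℝ := (x - α * Fintype.card V₁) • (1 : Matrix V₂ V₂ ℝ) - Aalpha G₂ α with hP
  set R := edgeIncMatrix G₁ with hR
  set Γ := coronal (Aalpha G₂ α) (x - α * Fintype.card V₁) with hΓ
  set B : Matrix V₁ (G₁.edgeSet ⊕ V₂) ℝ := Matrix.fromCols R (Matrix.of fun _ _ => 1) with hB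
  set C : Matrix (G₁.edgeSet ⊕ V₂) V₁ ℝ := Matrix.fromRows Rᵀ (Matrix.of fun _ _ => 1) with hC
  have hPu : IsUnit P.det := isUnit_iff_ne_zero.2 hdet
  set D : Matrix (G₁.edgeSet ⊕ V₂) (G₁.edgeSet ⊕ V₂) ℝ :=
    Matrix.fromBlocks ((x - 2 * α) • (1 : Matrix G₁.edgeSet G₁.edgeSet ℝ)) 0 0 P with hD
  have hDinv : D * Matrix.fromBlocks ((x - 2 * α)⁻¹ • 1) 0 0 P⁻¹ = 1 := by
    simp [hD, Matrix.fromBlocks_multiply, Matrix.mul_nonsing_inv _ hPu, smul_smul,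
      inv_mul_cancel₀ hy]
  let : Invertible D := ⟨_, mul_eq_one_comm.1 hDinv, hDinv⟩
  have hblocks : x • (1 : Matrix (V₁ ⊕ (G₁.edgeSet ⊕ V₂)) (V₁ ⊕ (G₁.edgeSet ⊕ V₂)) ℝ) -
      Aalpha (subdivisionVertexJoin G₁ G₂) α =
      Matrix.fromBlocks ((x - α * (r + Fintype.card V₂)) • (1 : Matrix V₁ V₁ ℝ))
        (-(1 - α) • B) (-(1 - α) • C) D := by
    rw [Aalpha_subdivisionVertexJoin_eq_fromBlocks G₂ hG₁]
    ext (v | e | u) (w | f | t) <;>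
      simp [hD, hP, hB, hC, hR, Matrix.one_apply, sub_mul, ← sub_sub] <;>
      split_ifs <;> ring
  have hcor : (Matrix.of fun _ _ => 1 : Matrix V₁ V₂ ℝ) * P⁻¹ *
      (Matrix.of fun _ _ => 1 : Matrix V₂ V₁ ℝ) = Γ • Matrix.of fun _ _ => (1 : ℝ) := by
    ext i j
    simp only [Matrix.mul_apply, Matrix.of_apply, one_mul, mul_one, Matrix.smul_apply,
      smul_eq_mul]
    rw [Finset.sum_comm, hΓ, coronal]
    congr!
  have hRR : R * Rᵀ = G₁.adjMatrix ℝ + (r : ℝ) • (1 : Matrix V₁ V₁ ℝ) :=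
    edgeIncMatrix_mul_transpose G₁ hG₁
  have hA : Aalpha G₁ α = (α * r) • (1 : Matrix V₁ V₁ ℝ) + (1 - α) • G₁.adjMatrix ℝ := by
    ext i j
    simp [Aalpha_apply, hG₁.sum_ite_adj, Matrix.one_apply, SimpleGraph.adjMatrix_apply,
      -Finset.sum_boole]
  have hschur : (x - α * (r + Fintype.card V₂)) • (1 : Matrix V₁ V₁ ℝ) -
      (-(1 - α) • B) * ⅟D * (-(1 - α) • C) =
      (x - 2 * α)⁻¹ •
        (((x - 2 * α) * (x - α * (r + Fintype.card V₂)) - (1 - α) * ((1 - α) * r - α * r)) •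
            (1 : Matrix V₁ V₁ ℝ) - (1 - α) • Aalpha G₁ α -
          ((x - 2 * α) * (1 - α) ^ 2 * Γ) • Matrix.of fun _ _ => (1 : ℝ)) := by
    rw [show ⅟D = Matrix.fromBlocks ((x - 2 * α)⁻¹ • 1) 0 0 P⁻¹ from rfl, hB, hC,
      Matrix.smul_mul, Matrix.smul_mul, Matrix.mul_smul, Matrix.fromCols_mul_fromBlocks,
      Matrix.fromCols_mul_fromRows]
    simp only [Matrix.mul_zero, add_zero, zero_add, Matrix.mul_smul, Matrix.smul_mul,
      Matrix.mul_one, hcor, hRR, hA]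
    ext i j
    simp only [Matrix.sub_apply, Matrix.add_apply, Matrix.smul_apply, smul_eq_mul]
    generalize hxy : x - 2 * α = y at hy ⊢
    field_simp
    rw [← hxy]
    ring
  rw [hblocks, Matrix.det_fromBlocks₂₂, hschur, Matrix.det_smul, hD, Matrix.det_fromBlocks_zero₂₁,
    Matrix.det_smul, Matrix.det_one, mul_one, zpow_sub₀ hy, zpow_natCast, zpow_natCast, inv_pow]
  ring

end Join

/-- Theorem 3.1: the `A_α`-characteristic polynomial of the subdivision-vertex join
`G₁ ∨̇ G₂` of an `r₁`-regular graph `G₁` (on `n₁` vertices and `m₁` edges) and an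
arbitrary graph `G₂` (on `n₂` vertices). -/
theorem Aalpha_charpoly_subdivisionVertexJoin
    {n₁ m₁ n₂ r₁ : ℕ} (G₁ : SimpleGraph (Fin n₁)) (G₂ : SimpleGraph (Fin n₂))
    (hconn : G₁.Connected) (hreg : G₁.IsRegularOfDegree r₁)
    (hm : Fintype.card G₁.edgeSet = m₁)
    (α : ℝ) (hα : α ∈ Set.Icc (0 : ℝ) 1)
    (μ : Fin n₁ → ℝ) (hμ : Antitone μ)
    (hμch : (Aalpha G₁ α).charpoly = ∏ i, (X - C (μ i)))
    (x : ℝ)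
    (hx₁ : ((x - α * n₁) • (1 : Matrix (Fin n₂) (Fin n₂) ℝ) - Aalpha G₂ α).det ≠ 0)
    (hx₂ : x ≠ 2 * α) :
    ((Aalpha (subdivisionVertexJoin G₁ G₂) α).charpoly).eval x =
      (x - 2 * α) ^ ((m₁ : ℤ) - (n₁ : ℤ)) *
        ((Aalpha G₂ α).charpoly).eval (x - α * n₁) *
        (∏ i ∈ Finset.univ.filter (fun i : Fin n₁ => i.val ≠ 0),
          (x ^ 2 - α * (2 + r₁ + n₂) * x + α * (α * r₁ + r₁ + 2 * α * n₂)
            - (1 - α) * ((1 - α) * r₁ + μ i))) *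
        (x ^ 2 - α * (2 + r₁ + n₂) * x - 2 * (r₁ - 2 * α * r₁ - α ^ 2 * n₂)
          - n₁ * (1 - α) ^ 2 * (x - 2 * α) * coronal (Aalpha G₂ α) (x - α * n₁)) := by
  have : NeZero n₁ := ⟨by
    rintro rfl
    exact hconn.nonempty.elim fun i => i.elim0⟩
  have hle : ∀ i, μ i ≤ r₁ := fun i => Aalpha_root_le hreg hα <| by
    rw [hμch, IsRoot, eval_prod]
    exact Finset.prod_eq_zero (Finset.mem_univ i) (by simp)
  have hμ₀ : μ 0 = r₁ := by
    have hroot := Aalpha_isRoot_degree (α := α) hreg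
    rw [hμch, IsRoot, eval_prod, Finset.prod_eq_zero_iff] at hroot
    obtain ⟨i, -, hi⟩ := hroot
    rw [eval_sub, eval_X, eval_C, sub_eq_zero] at hi
    exact (hle 0).antisymm (hi.trans_le (hμ (Fin.zero_le i)))
  have hrow : ∀ i, ∑ j, Aalpha G₁ α i j = μ 0 := fun i => by
    rw [sum_Aalpha_of_isRegularOfDegree hreg, hμ₀]
  have hdet := det_smul_one_sub_Aalpha_subdivisionVertexJoin G₂ hreg (α := α) (x := x)
    (by simpa using hx₁) hx₂
  have hfilter : Finset.univ.filter (fun i : Fin n₁ => i.val ≠ 0) = Finset.univ.erase 0 := by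
    ext i
    simp
  rw [Matrix.eval_charpoly_eq_det_smul_one_sub, Matrix.eval_charpoly_eq_det_smul_one_sub, hfilter]
  rw [Matrix.det_smul_one_sub_smul_sub_smul_of_one hμch hrow, hμ₀] at hdet
  simp only [Fintype.card_fin] at hdet
  rw [← mul_assoc] at hdet
  subst hm
  convert hdet using 2
  · congr 1
    refine Finset.prod_congr rfl fun i _ => ?_
    ring
  · ring
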